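/- A finite lattice A is amenable, i.e., for every lattice B with zero the tensor product A ⊗ B is a lattice, if and only if A satisfies condition (T∨). -/

import Mathlib

/-! Say that `p` depends on `q` if `q` belongs to a minimal pair `(p, I)`. For finite `A`,
condition (T) says that this relation has no cycles, that is, that it is well-founded; and `A ⊗ B`
is a lattice if and only if the finitely generated bi-ideals of `A × B` are closed under binary
intersection.

If dependency is well-founded, the section `{b | (p, b) ∈ K}` of a finitely generated bi-ideal `K`
at a join-irreducible `p` is a principal ideal, by induction on `p`: a nontrivial cover of `p`
refines to a minimal pair, so the greatest element of the section is the join of the second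
components of the generators above `p` and, over the minimal pairs `(p, I)`, of the meets of the
greatest elements of the sections at the members of `I`. Having principal sections passes to
intersections and, `A` being finite, implies finite generation.

Conversely, if `A` is amenable, the sections of a finitely generated bi-ideal over a (small)
complete lattice `B` are closed under countable joins. Given a sequence `s` in the section at `p`,
glue to `B` a chain of type `ω + 1` whose element `t` lies below `b` exactly when `s i ≤ b` for
all `i < t`. All elements of the chain but its top `e` belong to the section at `p` over the
enlarged lattice, and if `e` did not, the intersection with the bi-ideal generated by `(p, e)`
would need generators reaching arbitrarily far up the chain.

Apply this to the complete lattice of level functions `φ : A → ℕ∞`, for which `φ ⊥ = 0`, `φ` is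
monotone and `φ (a ⊔ b) ≤ max (φ a) (φ b) + 1`, and to the bi-ideal generated by the pairs
`(a, chi a)`, where `chi a` is the largest level function vanishing at `a`. Every pair `(p, φ)` in
it has `φ p < ⊤`, so by closure under countable joins the values `φ p` are bounded for each `p`.
Their maximum is smaller at `q` than at `p` whenever `p` depends on `q`: if `(p, I)` is a minimal
pair and `q ∈ I`, then `p` is not below the join `t` of `I \ {q}` and the elements strictly below
`q`, so a level `k` attained at `q` yields a level function that vanishes below `t`, is `k` at `q`
and `k + 1` at `p`, and lies in every section at a member of `I`, hence in the section at `p`.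
-/

universe u

section BiIdeals

variable (A B : Type*) [SemilatticeSup A] [OrderBot A] [SemilatticeSup B] [OrderBot B]

/-- `⊥_{A,B} = (A × {0}) ∪ ({0} × B)`. -/
def botPairs : Set (A × B) := {p | p.1 = ⊥ ∨ p.2 = ⊥}

/-- A bi-ideal of `A × B`. -/
def IsBiIdeal (I : Set (A × B)) : Prop :=
  (∀ p q : A × B, p.1 ≤ q.1 → p.2 ≤ q.2 → q ∈ I → p ∈ I) ∧
  botPairs A B ⊆ I ∧
  (∀ (a : A) (b₀ b₁ : B), (a, b₀) ∈ I → (a, b₁) ∈ I → (a, b₀ ⊔ b₁) ∈ I) ∧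
  (∀ (a₀ a₁ : A) (b : B), (a₀, b) ∈ I → (a₁, b) ∈ I → (a₀ ⊔ a₁, b) ∈ I)

/-- A finitely generated bi-ideal: the least bi-ideal containing some finite
subset of `A × B`. -/
def IsFGBiIdeal (J : Set (A × B)) : Prop :=
  ∃ F : Finset (A × B),
    IsLeast {I : Set (A × B) | IsBiIdeal A B I ∧ ↑F ⊆ I} J

/-- The tensor product `A ⊗ B` (the poset of finitely generated bi-ideals of
`A × B`, ordered by inclusion) is a lattice. -/
def TensorIsLattice : Prop :=
  ∀ I J : {K : Set (A × B) // IsFGBiIdeal A B K},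
    (∃ s, IsLUB {I, J} s) ∧ (∃ m, IsGLB {I, J} m)

end BiIdeals

/-- `p` is join-irreducible. -/
def SJoinIrr (S : Type*) [SemilatticeSup S] (p : S) : Prop :=
  ¬ IsBot p ∧ ∀ b c : S, b ⊔ c = p → b = p ∨ c = p

/-- A minimal pair `(p, I)`. -/
def SMinimalPair (S : Type*) [SemilatticeSup S] (p : S) (I : Finset S) : Prop :=
  SJoinIrr S p ∧ (∀ q ∈ I, SJoinIrr S q) ∧ 2 ≤ I.card ∧ p ∉ I ∧
  (∃ hI : I.Nonempty, p ≤ I.sup' hI id) ∧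
  ∀ (J : Finset S) (hJ : J.Nonempty), (∀ q ∈ J, SJoinIrr S q) →
    (∀ x ∈ J, ∃ y ∈ I, x ≤ y) → p ≤ J.sup' hJ id → I ⊆ J

/-- Condition (T). -/
def CondT (S : Type*) [SemilatticeSup S] : Prop :=
  ∃ r : S → S → Prop,
    (∀ p, SJoinIrr S p → r p p) ∧
    (∀ p q, SJoinIrr S p → SJoinIrr S q → r p q → r q p → p = q) ∧
    (∀ p q s, SJoinIrr S p → SJoinIrr S q → SJoinIrr S s → r p q → r q s → r p s) ∧
    (∀ p q, SJoinIrr S p → SJoinIrr S q → r p q ∨ r q p) ∧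
    (∀ (p : S) (I : Finset S), SMinimalPair S p I → ∀ j ∈ I, r p j)

/-! ### Generation of bi-ideals -/

section Generation

variable {A B B' : Type*} [SemilatticeSup A] [OrderBot A] [SemilatticeSup B] [OrderBot B]
  [SemilatticeSup B'] [OrderBot B']

namespace IsBiIdeal

variable {K : Set (A × B)}

theorem intro
    (lower : ∀ {a a' : A} {b b' : B}, a ≤ a' → b ≤ b' → (a', b') ∈ K → (a, b) ∈ K)
    (bot_left : ∀ b, (⊥, b) ∈ K) (bot_right : ∀ a, (a, ⊥) ∈ K)
    (sup_right : ∀ {a b₀ b₁}, (a, b₀) ∈ K → (a, b₁) ∈ K → (a, b₀ ⊔ b₁) ∈ K)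
    (sup_left : ∀ {a₀ a₁ b}, (a₀, b) ∈ K → (a₁, b) ∈ K → (a₀ ⊔ a₁, b) ∈ K) :
    IsBiIdeal A B K := by
  refine ⟨fun _ _ => lower, ?_, fun _ _ _ => sup_right, fun _ _ _ => sup_left⟩
  rintro ⟨a, b⟩ (rfl | rfl)
  exacts [bot_left b, bot_right a]

theorem mem_of_le (hK : IsBiIdeal A B K) {a a' : A} {b b' : B} (h : (a', b') ∈ K)
    (ha : a ≤ a') (hb : b ≤ b') : (a, b) ∈ K :=
  hK.1 (a, b) (a', b') ha hb h

theorem bot_left_mem (hK : IsBiIdeal A B K) (b : B) : (⊥, b) ∈ K :=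
  hK.2.1 (Or.inl rfl)

theorem bot_right_mem (hK : IsBiIdeal A B K) (a : A) : (a, ⊥) ∈ K :=
  hK.2.1 (Or.inr rfl)

theorem sup_right_mem (hK : IsBiIdeal A B K) {a : A} {b₀ b₁ : B} (h₀ : (a, b₀) ∈ K)
    (h₁ : (a, b₁) ∈ K) : (a, b₀ ⊔ b₁) ∈ K :=
  hK.2.2.1 a b₀ b₁ h₀ h₁

theorem sup_left_mem (hK : IsBiIdeal A B K) {a₀ a₁ : A} {b : B} (h₀ : (a₀, b) ∈ K)
    (h₁ : (a₁, b) ∈ K) : (a₀ ⊔ a₁, b) ∈ K :=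
  hK.2.2.2 a₀ a₁ b h₀ h₁

theorem finsetSup_right_mem {T : Type*} (hK : IsBiIdeal A B K) {a : A} {s : Finset T} {f : T → B}
    (h : ∀ t ∈ s, (a, f t) ∈ K) : (a, s.sup f) ∈ K :=
  Finset.sup_induction (p := fun b => (a, b) ∈ K) (hK.bot_right_mem a)
    (fun _ h₀ _ h₁ => hK.sup_right_mem h₀ h₁) h

theorem finsetSup_left_mem {T : Type*} (hK : IsBiIdeal A B K) {b : B} {s : Finset T} {f : T → A}
    (h : ∀ t ∈ s, (f t, b) ∈ K) : (s.sup f, b) ∈ K :=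
  Finset.sup_induction (p := fun a => (a, b) ∈ K) (hK.bot_left_mem b)
    (fun _ h₀ _ h₁ => hK.sup_left_mem h₀ h₁) h

theorem sInter {S : Set (Set (A × B))} (hS : ∀ K ∈ S, IsBiIdeal A B K) : IsBiIdeal A B (⋂₀ S) :=
  intro (fun ha hb h K hK => (hS K hK).mem_of_le (h K hK) ha hb)
    (fun b K hK => (hS K hK).bot_left_mem b) (fun a K hK => (hS K hK).bot_right_mem a)
    (fun h₀ h₁ K hK => (hS K hK).sup_right_mem (h₀ K hK) (h₁ K hK))
    (fun h₀ h₁ K hK => (hS K hK).sup_left_mem (h₀ K hK) (h₁ K hK))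

theorem inter {I J : Set (A × B)} (hI : IsBiIdeal A B I) (hJ : IsBiIdeal A B J) :
    IsBiIdeal A B (I ∩ J) :=
  Set.sInter_pair I J ▸ sInter (by simp [hI, hJ])

theorem preimage {F : Type*} [FunLike F B' B] [SupHomClass F B' B] (hK : IsBiIdeal A B K) (f : F)
    (hf : ∀ a, (a, f ⊥) ∈ K) : IsBiIdeal A B' (Prod.map id f ⁻¹' K) :=
  have hmono : Monotone f := OrderHomClass.mono f
  have hsup : ∀ b₀ b₁, f (b₀ ⊔ b₁) = f b₀ ⊔ f b₁ := map_sup f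
  intro (fun ha hb h => hK.mem_of_le h ha (hmono hb)) (fun b => hK.bot_left_mem (f b)) hf
    (fun {a b₀ b₁} h₀ h₁ => show (a, f (b₀ ⊔ b₁)) ∈ K from
      (hsup b₀ b₁).symm ▸ hK.sup_right_mem h₀ h₁)
    (fun h₀ h₁ => hK.sup_left_mem h₀ h₁)

/-- The section `{a | (a, b) ∈ K}` of a bi-ideal `K`, as an ideal of `A`. -/
def fstIdeal (hK : IsBiIdeal A B K) (b : B) : Order.Ideal A where
  carrier := {a | (a, b) ∈ K}
  lower' _ _ ha h := hK.mem_of_le h ha le_rfl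
  nonempty' := ⟨⊥, hK.bot_left_mem b⟩
  directed' a₀ h₀ a₁ h₁ := ⟨a₀ ⊔ a₁, hK.sup_left_mem h₀ h₁, le_sup_left, le_sup_right⟩

end IsBiIdeal

theorem isBiIdeal_fst_mem_or_snd_le (s : Order.Ideal A) (d : B) :
    IsBiIdeal A B {y | y.1 ∈ s ∨ y.2 ≤ d} := by
  refine .intro (fun ha hb => Or.imp (s.lower ha) hb.trans) (fun _ => Or.inl s.bot_mem)
    (fun _ => Or.inr bot_le) ?_ ?_
  · rintro a b₀ b₁ (h₀ | h₀) (h₁ | h₁)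
    exacts [Or.inl h₀, Or.inl h₀, Or.inl h₁, Or.inr (sup_le h₀ h₁)]
  · rintro a₀ a₁ b (h₀ | h₀) (h₁ | h₁)
    exacts [Or.inl (s.sup_mem h₀ h₁), Or.inr h₁, Or.inr h₀, Or.inr h₀]

/-- The bi-ideal generated by a set `F`. -/
def biClosure (F : Set (A × B)) : Set (A × B) :=
  ⋂₀ {I | IsBiIdeal A B I ∧ F ⊆ I}

variable {F K : Set (A × B)}

theorem isBiIdeal_biClosure (F : Set (A × B)) : IsBiIdeal A B (biClosure F) :=
  .sInter fun _ hI => hI.1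

theorem subset_biClosure (F : Set (A × B)) : F ⊆ biClosure F :=
  Set.subset_sInter fun _ hI => hI.2

theorem biClosure_subset (hK : IsBiIdeal A B K) (hF : F ⊆ K) : biClosure F ⊆ K :=
  Set.sInter_subset_of_mem ⟨hK, hF⟩

theorem isLeast_biClosure (F : Set (A × B)) :
    IsLeast {I | IsBiIdeal A B I ∧ F ⊆ I} (biClosure F) :=
  ⟨⟨isBiIdeal_biClosure F, subset_biClosure F⟩, fun _ hI => biClosure_subset hI.1 hI.2⟩

theorem isFGBiIdeal_iff : IsFGBiIdeal A B K ↔ ∃ F : Set (A × B), F.Finite ∧ biClosure F = K := by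
  constructor
  · rintro ⟨F, hF⟩
    exact ⟨F, F.finite_toSet, (isLeast_biClosure _).unique hF⟩
  · rintro ⟨F, hF, rfl⟩
    exact ⟨hF.toFinset, by simpa using isLeast_biClosure F⟩

theorem isFGBiIdeal_biClosure (hF : F.Finite) : IsFGBiIdeal A B (biClosure F) :=
  isFGBiIdeal_iff.2 ⟨F, hF, rfl⟩

theorem IsFGBiIdeal.isBiIdeal (hK : IsFGBiIdeal A B K) : IsBiIdeal A B K := by
  obtain ⟨F, -, rfl⟩ := isFGBiIdeal_iff.1 hK
  exact isBiIdeal_biClosure F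

theorem IsFGBiIdeal.preimage_orderIso (hK : IsFGBiIdeal A B K) (e : B' ≃o B) :
    IsFGBiIdeal A B' (Prod.map id e ⁻¹' K) := by
  obtain ⟨F, hF, rfl⟩ := isFGBiIdeal_iff.1 hK
  have preimage_isBiIdeal {I : Set (A × B)} (hI : IsBiIdeal A B I) :
      IsBiIdeal A B' (Prod.map id e ⁻¹' I) :=
    hI.preimage e fun a => e.map_bot ▸ hI.bot_right_mem a
  have preimage_symm_isBiIdeal {I : Set (A × B')} (hI : IsBiIdeal A B' I) :
      IsBiIdeal A B (Prod.map id e.symm ⁻¹' I) :=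
    hI.preimage e.symm fun a => e.symm.map_bot ▸ hI.bot_right_mem a
  refine isFGBiIdeal_iff.2 ⟨Prod.map id e.symm '' F, hF.image _, Set.Subset.antisymm ?_ ?_⟩
  · refine biClosure_subset (preimage_isBiIdeal (isBiIdeal_biClosure F)) ?_
    rintro _ ⟨y, hy, rfl⟩
    simpa [Prod.map] using subset_biClosure F hy
  · intro y hy
    have hsub := biClosure_subset (preimage_symm_isBiIdeal (isBiIdeal_biClosure _))
      (Set.image_subset_iff.1 (subset_biClosure (Prod.map id e.symm '' F)))
    simpa [Prod.map] using hsub hy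

end Generation

/-! ### When the tensor product is a lattice -/

section TensorProduct

variable {A B : Type*} [SemilatticeSup A] [OrderBot A]

theorem tensorIsLattice_iff_isFGBiIdeal_inter [SemilatticeSup B] [OrderBot B] :
    TensorIsLattice A B ↔
      ∀ I J, IsFGBiIdeal A B I → IsFGBiIdeal A B J → IsFGBiIdeal A B (I ∩ J) := by
  constructor
  · intro h I J hI hJ
    obtain ⟨-, ⟨M, hM⟩, hMlower, hMgreatest⟩ := h ⟨I, hI⟩ ⟨J, hJ⟩
    have hMI : M ⊆ I := hMlower (Set.mem_insert _ _)
    have hMJ : M ⊆ J := hMlower (Set.mem_insert_of_mem _ rfl)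
    suffices hIM : I ∩ J ⊆ M from (Set.subset_inter hMI hMJ).antisymm hIM ▸ hM
    intro y hy
    have hlower : ⟨biClosure {y}, isFGBiIdeal_biClosure (Set.finite_singleton y)⟩ ∈
        lowerBounds {(⟨I, hI⟩ : {K // IsFGBiIdeal A B K}), ⟨J, hJ⟩} := by
      rintro _ (rfl | rfl)
      · exact biClosure_subset hI.isBiIdeal (Set.singleton_subset_iff.2 hy.1)
      · exact biClosure_subset hJ.isBiIdeal (Set.singleton_subset_iff.2 hy.2)
    exact hMgreatest hlower (subset_biClosure _ rfl)
  · rintro h ⟨I, hI⟩ ⟨J, hJ⟩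
    refine ⟨?_, ⟨I ∩ J, h I J hI hJ⟩, ?_, fun K hK => ?_⟩
    · obtain ⟨F, hF, rfl⟩ := isFGBiIdeal_iff.1 hI
      obtain ⟨G, hG, rfl⟩ := isFGBiIdeal_iff.1 hJ
      refine ⟨⟨biClosure (F ∪ G), isFGBiIdeal_biClosure (hF.union hG)⟩, ?_, fun K hK => ?_⟩
      · have hFG := Set.union_subset_iff.1 (subset_biClosure (F ∪ G))
        rintro _ (rfl | rfl)
        · exact biClosure_subset (isBiIdeal_biClosure _) hFG.1
        · exact biClosure_subset (isBiIdeal_biClosure _) hFG.2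
      · exact biClosure_subset K.2.isBiIdeal <| Set.union_subset
          ((subset_biClosure F).trans (hK (Set.mem_insert _ _)))
          ((subset_biClosure G).trans (hK (Set.mem_insert_of_mem _ rfl)))
    · rintro _ (rfl | rfl)
      exacts [Set.inter_subset_left, Set.inter_subset_right]
    · exact Set.subset_inter (hK (Set.mem_insert _ _)) (hK (Set.mem_insert_of_mem _ rfl))

theorem TensorIsLattice.of_orderIso {B' : Type*} [SemilatticeSup B] [OrderBot B] [SemilatticeSup B']
    [OrderBot B'] (h : TensorIsLattice A B) (e : B ≃o B') : TensorIsLattice A B' := by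
  rw [tensorIsLattice_iff_isFGBiIdeal_inter] at h ⊢
  intro I J hI hJ
  have hIJ := (h _ _ (hI.preimage_orderIso e) (hJ.preimage_orderIso e)).preimage_orderIso e.symm
  simpa [← Set.preimage_inter, Set.preimage_preimage, Prod.map] using hIJ

theorem tensorIsLattice_of_small
    (h : ∀ (B : Type u) [Lattice B] [OrderBot B], TensorIsLattice A B)
    (B : Type*) [Small.{u} B] [Lattice B] [OrderBot B] : TensorIsLattice A B :=
  let e := orderIsoShrink.{u} B
  letI : Lattice (Shrink.{u} B) := e.toGaloisInsertion.liftLattice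
  (h (Shrink.{u} B)).of_orderIso e.symm

theorem TensorIsLattice.mem_of_chain_mem [SemilatticeSup B] [OrderBot B]
    (hAB : TensorIsLattice A B) {H : Set (A × B)} (hH : IsFGBiIdeal A B H) {p : A} {c : ℕ → B}
    {e : B} (hc : StrictMono c) (hce : ∀ n, c n ≤ e) (hlt : ∀ b < e, ∃ n, b ≤ c n)
    (hmem : ∀ n, (p, c n) ∈ H) : (p, e) ∈ H := by
  have hpe := isFGBiIdeal_biClosure (Set.finite_singleton (p, e))
  obtain ⟨G, ⟨-, hG⟩, hleast⟩ := tensorIsLattice_iff_isFGBiIdeal_inter.1 hAB H _ hH hpe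
  have hgen : ∀ y ∈ G, ∃ n, (y.1, e) ∈ H ∨ y.2 ≤ c n := by
    intro y hy
    have hye : y.1 ∈ Order.Ideal.principal ⊥ ∨ y.2 ≤ e :=
      biClosure_subset (isBiIdeal_fst_mem_or_snd_le (.principal ⊥) e) (by simp) (hG hy).2
    rcases hye with hbot | hle
    · exact ⟨0, Or.inl (hH.isBiIdeal.mem_of_le (hH.isBiIdeal.bot_left_mem e) hbot le_rfl)⟩
    rcases hle.eq_or_lt with heq | hlt'
    · exact ⟨0, Or.inl (heq ▸ (hG hy).1)⟩
    · exact (hlt _ hlt').imp fun _ => Or.inr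
  choose! n hn using hgen
  -- No generator of `H ∩ biClosure {(p, e)}` passes level `N`, unless `H` has it at level `e` too.
  let N := G.sup n
  have hsub : H ∩ biClosure {(p, e)} ⊆ {y | y.1 ∈ hH.isBiIdeal.fstIdeal e ∨ y.2 ≤ c N} :=
    hleast ⟨isBiIdeal_fst_mem_or_snd_le _ _, fun y hy =>
      (hn y hy).imp_right fun h => h.trans (hc.monotone (Finset.le_sup hy))⟩
  have hnext : (p, c (N + 1)) ∈ biClosure {(p, e)} :=
    hpe.isBiIdeal.mem_of_le (subset_biClosure _ rfl) le_rfl (hce _)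
  exact (hsub ⟨hmem (N + 1), hnext⟩).resolve_right (hc N.lt_succ_self).not_ge

end TensorProduct

/-! ### Minimal pairs and join-dependency -/

section MinimalPairs

variable {A : Type*} [SemilatticeSup A]

theorem sJoinIrr_iff_supIrred [OrderBot A] {p : A} : SJoinIrr A p ↔ SupIrred p := by
  rw [SJoinIrr, SupIrred, isBot_iff_eq_bot, isMin_iff_eq_bot]

theorem exists_sJoinIrr_decomposition [OrderBot A] [WellFoundedLT A] (a : A) :
    ∃ s : Finset A, s.sup id = a ∧ ∀ p ∈ s, SJoinIrr A p := by
  simpa only [sJoinIrr_iff_supIrred] using exists_supIrred_decomposition a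

theorem le_of_forall_sJoinIrr_le [OrderBot A] [WellFoundedLT A] {a b : A}
    (h : ∀ p, SJoinIrr A p → p ≤ a → p ≤ b) : a ≤ b := by
  obtain ⟨s, rfl, hs⟩ := exists_sJoinIrr_decomposition a
  exact Finset.sup_le fun p hp => h p (hs p hp) (Finset.le_sup (f := id) hp)

theorem sJoinIrr_of_maximal_of_minimal_cover {p q : A} {L : LowerSet A}
    (hL : Minimal (fun L : LowerSet A => p ∈ lowerBounds (upperBounds (L : Set A))) L)
    (hq : Maximal (· ∈ L) q) : SJoinIrr A q := by
  by_contra hirr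
  refine hL.not_prop_of_lt (LowerSet.erase_lt.2 hq.prop) fun u hu => hL.prop fun x hx => ?_
  by_cases hqx : q ≤ x
  swap
  · exact hu ⟨hx, hqx⟩
  obtain rfl : x = q := (hq.eq_of_le hx hqx).symm
  rcases not_and_or.1 hirr with hbot | hsup
  · exact not_not.1 hbot u
  · push Not at hsup
    obtain ⟨b, c, rfl, hb, hc⟩ := hsup
    have le_of_lt_sup {d : A} (hd : d < b ⊔ c) : d ≤ u := hu ⟨L.lower hd.le hx, hd.not_ge⟩
    exact sup_le (le_of_lt_sup (le_sup_left.lt_of_ne hb)) (le_of_lt_sup (le_sup_right.lt_of_ne hc))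

theorem sMinimalPair_of_minimal_cover {p : A} (hp : SJoinIrr A p) {L : LowerSet A} (hpL : p ∉ L)
    (hL : Minimal (fun L : LowerSet A => p ∈ lowerBounds (upperBounds (L : Set A))) L)
    {I : Finset A} (hI : ∀ q, q ∈ I ↔ Maximal (· ∈ L) q) (hLI : ∀ x ∈ L, ∃ q ∈ I, x ≤ q) :
    SMinimalPair A p I := by
  have hIL : ∀ q ∈ I, q ∈ L := fun q hq => ((hI q).1 hq).prop
  have le_of_forall_le {u : A} (hu : ∀ q ∈ I, q ≤ u) : p ≤ u :=
    hL.prop fun x hx => let ⟨q, hq, hxq⟩ := hLI x hx; hxq.trans (hu q hq)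
  have hne : I.Nonempty := by
    by_contra hempty
    refine hp.1 fun u => le_of_forall_le ?_
    simp [Finset.not_nonempty_iff_eq_empty.1 hempty]
  refine ⟨hp, fun q hq => sJoinIrr_of_maximal_of_minimal_cover hL ((hI q).1 hq), ?_,
    fun h => hpL (hIL p h), ⟨hne, le_of_forall_le fun q hq => Finset.le_sup' id hq⟩, ?_⟩
  · refine Finset.one_lt_card.2 ?_
    by_contra! hsubsingleton
    obtain ⟨q, hq⟩ := hne
    have hpq : p ≤ q := le_of_forall_le fun r hr => (hsubsingleton r hr q hq).le
    exact hpL (L.lower hpq (hIL q hq))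
  · intro J hJ _ hJI hpJ q hq
    have hJL : (J : Set A) ⊆ L := fun j hj =>
      let ⟨i, hi, hji⟩ := hJI j hj; L.lower hji (hIL i hi)
    have hcover : p ∈ lowerBounds (upperBounds (lowerClosure (J : Set A) : Set A)) := fun u hu =>
      hpJ.trans (Finset.sup'_le hJ id fun j hj => hu (subset_lowerClosure hj))
    obtain ⟨j, hj, hqj⟩ := hL.le_of_le hcover (lowerClosure_min hJL L.lower) (hIL q hq)
    exact ((hI q).1 hq).eq_of_le (hJL hj) hqj ▸ hj

theorem exists_sMinimalPair_refining [Finite A] {p : A} (hp : SJoinIrr A p) {C : Set A}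
    (hcover : p ∈ lowerBounds (upperBounds C)) (hC : ∀ c ∈ C, ¬ p ≤ c) :
    ∃ I, SMinimalPair A p I ∧ ∀ q ∈ I, ∃ c ∈ C, q ≤ c := by
  obtain ⟨L, hLC, hL⟩ := exists_minimal_le_of_wellFoundedLT
    (fun L : LowerSet A => p ∈ lowerBounds (upperBounds (L : Set A))) (lowerClosure C)
    (by rwa [upperBounds_lowerClosure])
  let I := (Set.toFinite {q | Maximal (· ∈ L) q}).toFinset
  have hI : ∀ q, q ∈ I ↔ Maximal (· ∈ L) q := by simp [I]
  refine ⟨I, sMinimalPair_of_minimal_cover hp ?_ hL hI fun x hx => ?_,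
    fun q hq => hLC ((hI q).1 hq).prop⟩
  · intro hpL
    obtain ⟨c, hc, hpc⟩ := hLC hpL
    exact hC c hc hpc
  · obtain ⟨q, hxq, hq⟩ := (Set.toFinite (L : Set A)).exists_le_maximal hx
    exact ⟨q, (hI q).2 hq, hxq⟩

namespace SMinimalPair

variable {p q : A} {I : Finset A}

theorem nonempty (h : SMinimalPair A p I) : I.Nonempty :=
  h.2.2.2.2.1.1

theorem le_sup [OrderBot A] (h : SMinimalPair A p I) : p ≤ I.sup id := by
  obtain ⟨hne, hle⟩ := h.2.2.2.2.1
  exact hle.trans_eq (Finset.sup'_eq_sup hne id)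

theorem not_le (h : SMinimalPair A p I) (hq : q ∈ I) : ¬ p ≤ q := by
  obtain ⟨hp, -, -, hpI, -, hmin⟩ := h
  intro hpq
  have hI : I ⊆ {p} := hmin {p} (Finset.singleton_nonempty p) (by simpa using hp)
    (by simpa using ⟨q, hq, hpq⟩) (by simp)
  exact hpI (Finset.mem_singleton.1 (hI hq) ▸ hq)

theorem exists_separator [OrderBot A] [Finite A] (h : SMinimalPair A p I) (hq : q ∈ I) :
    ∃ t, ¬ p ≤ t ∧ (∀ i ∈ I, i ≠ q → i ≤ t) ∧ ∀ a < q, a ≤ t := by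
  classical
  obtain ⟨-, hIirr, hcard, -, -, hmin⟩ := h
  let J := (Set.toFinite {j | SJoinIrr A j ∧ j < q}).toFinset ∪ I.erase q
  have hJ : ∀ j, j ∈ J ↔ (SJoinIrr A j ∧ j < q) ∨ (j ≠ q ∧ j ∈ I) := by simp [J]
  have hne : J.Nonempty :=
    let ⟨i, hi, hiq⟩ := Finset.exists_mem_ne hcard q; ⟨i, (hJ i).2 (Or.inr ⟨hiq, hi⟩)⟩
  have hqJ : q ∉ J := by simp [hJ]
  refine ⟨J.sup' hne id, fun hp => hqJ (hmin J hne ?_ ?_ hp hq), fun i hi hiq => ?_,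
    fun a ha => le_of_forall_sJoinIrr_le fun j hj hja => ?_⟩
  · exact fun j hj => ((hJ j).1 hj).elim And.left fun hj => hIirr j hj.2
  · exact fun j hj => ((hJ j).1 hj).elim (fun hj => ⟨q, hq, hj.2.le⟩) fun hj => ⟨j, hj.2, le_rfl⟩
  · exact Finset.le_sup' id ((hJ i).2 (Or.inr ⟨hiq, hi⟩))
  · exact Finset.le_sup' id ((hJ j).2 (Or.inl ⟨hj, hja.trans_lt ha⟩))

end SMinimalPair

variable (A) in
/-- The join-dependency relation of `A`. The arguments are ordered so that well-foundedness of
`JoinDep A` allows induction from the members of the minimal pairs `(p, I)` to `p`. -/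
def JoinDep (q p : A) : Prop :=
  ∃ I, SMinimalPair A p I ∧ q ∈ I

theorem CondT.wellFounded_joinDep [Finite A] (h : CondT A) : WellFounded (JoinDep A) := by
  obtain ⟨r, -, hantisymm, htrans, -, hpair⟩ := h
  let R (q p : A) : Prop := SJoinIrr A p ∧ SJoinIrr A q ∧ r p q ∧ p ≠ q
  have : IsTrans A R := ⟨fun s q p ⟨hq, hs, hqs, hne⟩ ⟨hp, _, hpq, _⟩ =>
    ⟨hp, hs, htrans p q s hp hq hs hpq hqs, fun hps =>
      hne (hantisymm q s hq hs hqs (hps ▸ hpq))⟩⟩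
  have : Std.Irrefl R := ⟨fun _ h => h.2.2.2 rfl⟩
  refine Subrelation.wf (r := R) ?_ (Finite.wellFounded_of_trans_of_irrefl R)
  rintro q p ⟨I, hI, hq⟩
  exact ⟨hI.1, hI.2.1 q hq, hpair p I hI q hq, fun hpq => hI.not_le hq hpq.le⟩

theorem condT_of_wellFounded_joinDep (h : WellFounded (JoinDep A)) : CondT A := by
  have hacyclic : ∀ p, ¬ Relation.TransGen (JoinDep A) p p := fun p hp =>
    h.transGen.asymmetric p p hp hp
  let R (p q : A) : Prop := Relation.ReflTransGen (JoinDep A) q p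
  have : IsPartialOrder A R :=
    { refl := fun _ => .refl
      trans := fun _ _ _ hpq hqs => hqs.trans hpq
      antisymm := fun p q hpq hqp => by
        rcases Relation.reflTransGen_iff_eq_or_transGen.1 hpq with heq | hpq
        · exact heq
        · exact (hacyclic q (hpq.trans_left hqp)).elim }
  obtain ⟨r, hr, hRr⟩ := extend_partialOrder R
  exact ⟨r, fun p _ => hr.refl p, fun p q _ _ => hr.antisymm p q, fun p q s _ _ _ => hr.trans p q s,
    fun p q _ _ => hr.total p q, fun p I hI j hj => hRr p j (.single ⟨I, hI, hj⟩)⟩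

theorem condT_iff_wellFounded_joinDep [Finite A] : CondT A ↔ WellFounded (JoinDep A) :=
  ⟨CondT.wellFounded_joinDep, condT_of_wellFounded_joinDep⟩

end MinimalPairs

/-! ### Principal sections -/

section PrincipalSections

variable {A B : Type*} [SemilatticeSup A] [OrderBot A]

/-- The sections of `K` at join-irreducible elements are principal ideals; for bi-ideals, this
property is finite generation in a form that passes to intersections. -/
def HasPrincipalSections [PartialOrder B] (K : Set (A × B)) : Prop :=
  ∀ p, SJoinIrr A p → ∃ x, IsGreatest {b | (p, b) ∈ K} x

theorem HasPrincipalSections.isFGBiIdeal [Finite A] [SemilatticeSup B] [OrderBot B]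
    {K : Set (A × B)} (h : HasPrincipalSections K) (hK : IsBiIdeal A B K) :
    IsFGBiIdeal A B K := by
  choose! x hx using h
  let F := (fun p => (p, x p)) '' {p | SJoinIrr A p}
  have hF : F ⊆ K := by
    rintro _ ⟨p, hp, rfl⟩
    exact (hx p hp).1
  refine isFGBiIdeal_iff.2 ⟨F, Set.toFinite F, (biClosure_subset hK hF).antisymm ?_⟩
  rintro ⟨a, b⟩ hab
  obtain ⟨s, rfl, hs⟩ := exists_sJoinIrr_decomposition a
  have hFb := isBiIdeal_biClosure F
  refine hFb.finsetSup_left_mem fun p hp => ?_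
  have hpb : (p, b) ∈ K := hK.mem_of_le hab (Finset.le_sup (f := id) hp) le_rfl
  exact hFb.mem_of_le (subset_biClosure F ⟨p, hs p hp, rfl⟩) le_rfl ((hx p (hs p hp)).2 hpb)

variable [Lattice B] [OrderBot B]

theorem IsBiIdeal.exists_isGreatest_common_section {K : Set (A × B)} (hK : IsBiIdeal A B K)
    {I : Finset A} (hI : I.Nonempty) (h : ∀ q ∈ I, ∃ x, IsGreatest {b | (q, b) ∈ K} x) :
    ∃ m, IsGreatest {b | ∀ q ∈ I, (q, b) ∈ K} m := by
  choose! x hx using h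
  exact ⟨I.inf' hI x, fun q hq => hK.mem_of_le (hx q hq).1 le_rfl (Finset.inf'_le x hq),
    fun b hb => Finset.le_inf' hI x fun q hq => (hx q hq).2 (hb q hq)⟩

theorem HasPrincipalSections.inter {I J : Set (A × B)} (hI : HasPrincipalSections I)
    (hJ : HasPrincipalSections J) (hIb : IsBiIdeal A B I) (hJb : IsBiIdeal A B J) :
    HasPrincipalSections (I ∩ J) := by
  intro p hp
  obtain ⟨x, hxI, hx⟩ := hI p hp
  obtain ⟨y, hyJ, hy⟩ := hJ p hp
  exact ⟨x ⊓ y, ⟨hIb.mem_of_le hxI le_rfl inf_le_left, hJb.mem_of_le hyJ le_rfl inf_le_right⟩,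
    fun b hb => le_inf (hx hb.1) (hy hb.2)⟩

theorem snd_le_of_mem_biClosure [Finite A] {F : Set (A × B)} {p : A} {b x : B}
    (hp : SJoinIrr A p) (hF : ∀ y ∈ F, p ≤ y.1 → y.2 ≤ x)
    (hx : ∀ I, SMinimalPair A p I → ∀ c, (∀ q ∈ I, (q, c) ∈ biClosure F) → c ≤ x)
    (hb : (p, b) ∈ biClosure F) : b ≤ x := by
  have hK := isBiIdeal_biClosure F
  suffices hbi : IsBiIdeal A B {y | y ∈ biClosure F ∧ (p ≤ y.1 → y.2 ≤ x)} from
    (biClosure_subset hbi (fun y hy => ⟨subset_biClosure F hy, hF y hy⟩) hb).2 le_rfl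
  refine .intro
    (fun ha hb ⟨h, h'⟩ => ⟨hK.mem_of_le h ha hb, fun hpa => hb.trans (h' (hpa.trans ha))⟩)
    (fun c => ⟨hK.bot_left_mem c, fun hpbot => ?_⟩) (fun a => ⟨hK.bot_right_mem a, fun _ => bot_le⟩)
    (fun ⟨h₀, h₀'⟩ ⟨h₁, h₁'⟩ => ⟨hK.sup_right_mem h₀ h₁, fun hpa => sup_le (h₀' hpa) (h₁' hpa)⟩) ?_
  · exact (hp.1 (isBot_bot.mono hpbot)).elim
  · rintro a₀ a₁ c ⟨h₀, h₀'⟩ ⟨h₁, h₁'⟩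
    refine ⟨hK.sup_left_mem h₀ h₁, fun hpa => ?_⟩
    by_cases hp₀ : p ≤ a₀
    · exact h₀' hp₀
    by_cases hp₁ : p ≤ a₁
    · exact h₁' hp₁
    obtain ⟨I, hI, hIa⟩ := exists_sMinimalPair_refining (C := {a₀, a₁}) hp
      (fun u hu => hpa.trans (isLUB_pair.2 hu)) (by simp [hp₀, hp₁])
    refine hx I hI c fun q hq => ?_
    obtain ⟨_, rfl | rfl, hqa⟩ := hIa q hq
    exacts [hK.mem_of_le h₀ hqa le_rfl, hK.mem_of_le h₁ hqa le_rfl]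

theorem IsFGBiIdeal.hasPrincipalSections [Finite A] (hA : WellFounded (JoinDep A))
    {K : Set (A × B)} (hK : IsFGBiIdeal A B K) : HasPrincipalSections K := by
  classical
  have hKb := hK.isBiIdeal
  obtain ⟨F, hF, rfl⟩ := isFGBiIdeal_iff.1 hK
  intro p hp
  induction p using hA.induction with
  | _ p ih =>
    have hmeet : ∀ I, SMinimalPair A p I →
        ∃ m, IsGreatest {b | ∀ q ∈ I, (q, b) ∈ biClosure F} m := fun I hI =>
      hKb.exists_isGreatest_common_section hI.nonempty fun q hq => ih q ⟨I, hI, hq⟩ (hI.2.1 q hq)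
    choose! m hm using hmeet
    let G := (hF.subset (Set.sep_subset F fun y => p ≤ y.1)).toFinset
    let P := (Set.toFinite {I | SMinimalPair A p I}).toFinset
    have hG : ∀ y, y ∈ G ↔ y ∈ F ∧ p ≤ y.1 := by simp [G]
    have hP : ∀ I, I ∈ P ↔ SMinimalPair A p I := by simp [P]
    refine ⟨G.sup Prod.snd ⊔ P.sup m, hKb.sup_right_mem (hKb.finsetSup_right_mem fun y hy => ?_)
      (hKb.finsetSup_right_mem fun I hI => ?_), fun b hb => snd_le_of_mem_biClosure hp ?_ ?_ hb⟩
    · obtain ⟨hyF, hpy⟩ := (hG y).1 hy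
      exact hKb.mem_of_le (subset_biClosure F hyF) hpy le_rfl
    · have hI := (hP I).1 hI
      exact hKb.mem_of_le (hKb.finsetSup_left_mem (hm I hI).1) hI.le_sup le_rfl
    · exact fun y hy hpy => le_sup_of_le_left (Finset.le_sup ((hG y).2 ⟨hy, hpy⟩))
    · exact fun I hI c hc => ((hm I hI).2 hc).trans
        (le_sup_of_le_right (Finset.le_sup ((hP I).2 hI)))

theorem tensorIsLattice_of_wellFounded_joinDep [Finite A] (hA : WellFounded (JoinDep A)) :
    TensorIsLattice A B :=
  tensorIsLattice_iff_isFGBiIdeal_inter.2 fun _ _ hI hJ =>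
    ((hI.hasPrincipalSections hA).inter (hJ.hasPrincipalSections hA) hI.isBiIdeal
      hJ.isBiIdeal).isFGBiIdeal (hI.isBiIdeal.inter hJ.isBiIdeal)

end PrincipalSections

/-! ### Subtypes closed under suprema -/

section SSupStable

/-- A predicate on a complete lattice that is closed under arbitrary suprema; its subtype is again
a complete lattice, with the suprema of the ambient one. -/
class SSupStable {α : Type*} [CompleteLattice α] (P : α → Prop) : Prop where
  sSup_mem : ∀ T : Set α, (∀ x ∈ T, P x) → P (sSup T)

variable {α : Type*} [CompleteLattice α] {P : α → Prop} [SSupStable P]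

instance : SupSet {x // P x} :=
  ⟨fun T => ⟨sSup (Subtype.val '' T), SSupStable.sSup_mem _ (by rintro _ ⟨x, -, rfl⟩; exact x.2)⟩⟩

instance : CompleteLattice {x // P x} :=
  completeLatticeOfSup _ fun T =>
    have hT : IsLUB (Subtype.val '' T) (sSup T).1 := isLUB_sSup _
    ⟨fun _ hx => hT.1 (Set.mem_image_of_mem _ hx), fun _ hy =>
      hT.2 (Set.forall_mem_image.2 fun _ hx => hy hx)⟩

theorem coe_sSup (T : Set {x // P x}) : (sSup T).1 = sSup (Subtype.val '' T) :=
  rfl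

theorem coe_sup (x y : {x // P x}) : (x ⊔ y).1 = x.1 ⊔ y.1 := by
  rw [← sSup_pair]
  exact (coe_sSup _).trans (by rw [Set.image_pair, sSup_pair])

theorem coe_bot : (⊥ : {x // P x}).1 = ⊥ := by
  rw [← sSup_empty]
  exact (coe_sSup _).trans (by rw [Set.image_empty, sSup_empty])

end SSupStable

/-! ### Gluing an increasing chain to a complete lattice -/

section ChainGlue

variable {B : Type*} [CompleteLattice B] (s : ℕ → B)

/-- The supremum of the first `t` terms of the sequence `s`. -/
def initSup (t : ℕ∞) : B :=
  ⨆ (i : ℕ) (_ : (i : ℕ∞) < t), s i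

theorem initSup_mono : Monotone (initSup s) := fun _ _ h =>
  iSup_mono fun _ => iSup_mono' fun hi => ⟨hi.trans_le h, le_rfl⟩

theorem initSup_top : initSup s ⊤ = ⨆ i, s i := by
  simp [initSup]

theorem initSup_natCast (n : ℕ) : initSup s n = (Finset.range n).sup s := by
  simp [initSup, Finset.sup_eq_iSup]

/-- The elements of `ChainGlue s`, encoded as triples: `(⊤, True, b)` stands for the element `b` of
`B` and `(t, False, initSup s t)` for the element `t` of the added chain. -/
def IsGlued (x : ℕ∞ × Prop × B) : Prop :=
  (x.2.1 → x.1 = ⊤) ∧ (¬ x.2.1 → x.2.2 = initSup s x.1)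

instance : SSupStable (IsGlued s) where
  sSup_mem T hT := by
    by_cases hflag : ∃ x ∈ T, x.2.1
    · obtain ⟨x, hx, hx'⟩ := hflag
      have hle := le_sSup hx
      exact ⟨fun _ => top_le_iff.1 (((hT x hx).1 hx').symm.trans_le hle.1),
        fun hn => (hn (hle.2.1 hx')).elim⟩
    push Not at hflag
    have hchain : ∀ x ∈ T, x.2.2 = initSup s x.1 := fun x hx => (hT x hx).2 (hflag x hx)
    have hub : sSup T ≤ ((sSup T).1, False, initSup s (sSup T).1) := sSup_le fun x hx =>
      ⟨(le_sSup hx).1, hflag x hx, (hchain x hx).trans_le (initSup_mono s (le_sSup hx).1)⟩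
    refine ⟨fun h => (hub.2.1 h).elim, fun _ => hub.2.2.antisymm (iSup₂_le fun i hi => ?_)⟩
    rw [Prod.fst_sSup, lt_sSup_iff] at hi
    obtain ⟨_, ⟨x, hx, rfl⟩, hix⟩ := hi
    calc s i ≤ initSup s x.1 := le_iSup₂_of_le i hix le_rfl
      _ = x.2.2 := (hchain x hx).symm
      _ ≤ (sSup T).2.2 := (le_sSup hx).2.2

/-- The lattice obtained from `B` by adding a chain of order type `ω + 1`, whose element `t` lies
below the element `b` of `B` if and only if `s i ≤ b` for all `i < t`. -/
abbrev ChainGlue : Type _ :=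
  {x // IsGlued s x}

namespace ChainGlue

/-- The element `t` of the added chain. -/
def lo (t : ℕ∞) : ChainGlue s :=
  ⟨(t, False, initSup s t), False.elim, fun _ => rfl⟩

/-- The inclusion of `B`. -/
def hi : SupHom B (ChainGlue s) where
  toFun b := ⟨(⊤, True, b), fun _ => rfl, fun h => (h trivial).elim⟩
  map_sup' b b' := Subtype.ext <| by simp [coe_sup]

/-- The retraction onto `B`, which maps the top of the added chain to `⨆ i, s i`. -/
def proj : SupHom (ChainGlue s) B where
  toFun x := x.1.2.2
  map_sup' x y := by simp [coe_sup]

theorem proj_bot : proj s ⊥ = ⊥ := by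
  simp [proj, coe_bot]

theorem proj_lo_top : proj s (lo s ⊤) = ⨆ i, s i :=
  initSup_top s

theorem lo_strictMono : StrictMono (lo s) :=
  Monotone.strictMono_of_injective (fun _ _ h => ⟨h, le_rfl, initSup_mono s h⟩) fun _ _ h =>
    congrArg (fun x => x.1.1) h

theorem exists_le_lo_natCast_of_lt_lo_top {x : ChainGlue s} (hx : x < lo s ⊤) :
    ∃ n : ℕ, x ≤ lo s n := by
  obtain ⟨⟨t, f, b⟩, hglued⟩ := x
  have hf : ¬ f := hx.le.2.1
  obtain rfl : b = initSup s t := hglued.2 hf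
  have ht : t ≠ ⊤ := by
    rintro rfl
    exact hx.not_ge ⟨le_rfl, False.elim, le_rfl⟩
  lift t to ℕ using ht
  exact ⟨t, le_rfl, hf, le_rfl⟩

theorem lo_natCast_le_hi (n : ℕ) : lo s n ≤ hi s ((Finset.range n).sup s) :=
  ⟨le_top, False.elim, (initSup_natCast s n).le⟩

end ChainGlue

end ChainGlue

theorem iSup_mem_of_tensorIsLattice_chainGlue {A B : Type*} [SemilatticeSup A] [OrderBot A]
    [Finite A] [CompleteLattice B] {s : ℕ → B} (h : TensorIsLattice A (ChainGlue s))
    {K : Set (A × B)} (hK : IsFGBiIdeal A B K) {p : A} (hs : ∀ i, (p, s i) ∈ K) :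
    (p, ⨆ i, s i) ∈ K := by
  have hKb := hK.isBiIdeal
  obtain ⟨F, hF, rfl⟩ := isFGBiIdeal_iff.1 hK
  let G := F ∪ Set.range fun a => (a, ⊥)
  let H := biClosure (Prod.map id (ChainGlue.hi s) '' G)
  have hG : Prod.map id (ChainGlue.hi s) '' G ⊆ H := subset_biClosure _
  have hH : IsFGBiIdeal A (ChainGlue s) H :=
    isFGBiIdeal_biClosure ((hF.union (Set.finite_range _)).image _)
  have hi_mem : biClosure F ⊆ Prod.map id (ChainGlue.hi s) ⁻¹' H :=
    biClosure_subset (hH.isBiIdeal.preimage _ fun a => hG ⟨(a, ⊥), Or.inr ⟨a, rfl⟩, rfl⟩)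
      (Set.subset_union_left.trans (Set.image_subset_iff.1 hG))
  have proj_mem : H ⊆ Prod.map id (ChainGlue.proj s) ⁻¹' biClosure F := by
    refine biClosure_subset
      (hKb.preimage _ fun a => (ChainGlue.proj_bot s).symm ▸ hKb.bot_right_mem a) ?_
    rintro _ ⟨y, hy | ⟨a, rfl⟩, rfl⟩
    exacts [subset_biClosure F hy, hKb.bot_right_mem a]
  have lo_mem (n : ℕ) : (p, ChainGlue.lo s n) ∈ H :=
    have hsup : (p, (Finset.range n).sup s) ∈ biClosure F :=
      hKb.finsetSup_right_mem fun i _ => hs i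
    hH.isBiIdeal.mem_of_le (hi_mem hsup) le_rfl (ChainGlue.lo_natCast_le_hi s n)
  have lo_top_mem : (p, ChainGlue.lo s ⊤) ∈ H :=
    h.mem_of_chain_mem hH ((ChainGlue.lo_strictMono s).comp Nat.strictMono_cast)
      (fun n => (ChainGlue.lo_strictMono s).monotone le_top)
      (fun _ => ChainGlue.exists_le_lo_natCast_of_lt_lo_top s) lo_mem
  exact ChainGlue.proj_lo_top s ▸ proj_mem lo_top_mem

/-! ### Level functions -/

section LevelFunctions

variable {A : Type*} [SemilatticeSup A] [OrderBot A]

/-- A level function is a rank that a join can exceed by at most one. -/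
structure IsLevel (φ : A → ℕ∞) : Prop where
  map_bot : φ ⊥ = 0
  monotone : Monotone φ
  map_sup_le : ∀ a b, φ (a ⊔ b) ≤ φ a ⊔ φ b + 1

instance : SSupStable (IsLevel (A := A)) where
  sSup_mem T hT :=
    { map_bot := by
        simp only [sSup_apply, ENat.iSup_eq_zero]
        exact fun φ => (hT φ φ.2).map_bot
      monotone := by
        rw [sSup_eq_iSup']
        exact Monotone.iSup fun φ => (hT φ φ.2).monotone
      map_sup_le := fun a b => by
        simp only [sSup_apply]
        exact iSup_le fun φ => ((hT φ φ.2).map_sup_le a b).trans <| by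
          gcongr <;> exact le_iSup (fun ψ : T => ψ.1 _) φ }

variable (A) in
/-- The complete lattice of level functions on `A`. -/
abbrev LevelFn : Type _ :=
  {φ : A → ℕ∞ // IsLevel φ}

open Classical in
/-- The function that vanishes below `t`, and elsewhere equals `k` below `q` and `k + 1` otherwise;
a level function. -/
noncomputable def stepFn {A : Type*} [LE A] (t q : A) (k : ℕ∞) (a : A) : ℕ∞ :=
  if a ≤ t then 0 else if a ≤ q then k else k + 1

theorem isLevel_stepFn (t q : A) (k : ℕ∞) : IsLevel (stepFn t q k) where
  map_bot := if_pos bot_le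
  monotone a b hab := by
    by_cases hbt : b ≤ t
    · simp [stepFn, hbt, hab.trans hbt]
    by_cases hbq : b ≤ q
    · simp only [stepFn, hbt, hbq, hab.trans hbq, if_true, if_false]
      split_ifs <;> simp
    · simp only [stepFn, hbt, hbq, if_false]
      split_ifs <;> simp
  map_sup_le a b := by
    have le_add_one (c : A) : stepFn t q k c ≤ k + 1 := by
      unfold stepFn
      split_ifs <;> simp
    have le_of_not_le {c : A} (hc : ¬ c ≤ t) : k ≤ stepFn t q k c := by
      simp only [stepFn, hc, if_false]
      split_ifs <;> simp
    by_cases ha : a ≤ t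
    · by_cases hb : b ≤ t
      · simp [stepFn, sup_le ha hb]
      · exact (le_add_one _).trans (add_le_add_left (le_sup_of_le_right (le_of_not_le hb)) 1)
    · exact (le_add_one _).trans (add_le_add_left (le_sup_of_le_left (le_of_not_le ha)) 1)

/-- The characteristic function of `{a | ¬ a ≤ q}`, with value `⊤`: the greatest level function
that vanishes at `q`. -/
noncomputable def chi (q : A) : LevelFn A :=
  ⟨stepFn q q ⊤, isLevel_stepFn q q ⊤⟩

theorem le_chi_iff {φ : LevelFn A} {q : A} : φ ≤ chi q ↔ φ.1 q = 0 := by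
  refine ⟨fun h => ?_, fun h a => ?_⟩
  · simpa [chi, stepFn] using h q
  · by_cases ha : a ≤ q
    · exact ((φ.2.monotone ha).trans_eq h).trans bot_le
    · simp [chi, stepFn, ha]

theorem stepFn_le_sup_chi {t q : A} (ht : ∀ a < q, a ≤ t) (φ : LevelFn A) :
    stepFn t q (φ.1 q) ≤ (φ ⊔ chi q).1 := by
  intro a
  rw [coe_sup]
  by_cases haq : a ≤ q
  · refine le_sup_of_le_left ?_
    rcases haq.eq_or_lt with rfl | haq
    · simp only [stepFn, le_rfl, if_true]
      split_ifs <;> simp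
    · simp [stepFn, ht a haq]
  · simp [chi, stepFn, haq]

variable (A) in
/-- The bi-ideal of `A × LevelFn A` generated by the pairs `(a, chi a)`. -/
def levelIdeal : Set (A × LevelFn A) :=
  biClosure (Set.range fun a => (a, chi a))

theorem chi_mem_levelIdeal (a : A) : (a, chi a) ∈ levelIdeal A :=
  subset_biClosure _ ⟨a, rfl⟩

theorem isBiIdeal_levelIdeal : IsBiIdeal A (LevelFn A) (levelIdeal A) :=
  isBiIdeal_biClosure _

theorem isFGBiIdeal_levelIdeal [Finite A] : IsFGBiIdeal A (LevelFn A) (levelIdeal A) :=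
  isFGBiIdeal_biClosure (Set.finite_range _)

theorem ne_top_of_mem_levelIdeal {a : A} {φ : LevelFn A} (h : (a, φ) ∈ levelIdeal A) :
    φ.1 a ≠ ⊤ := by
  suffices hbi : IsBiIdeal A (LevelFn A) {y | y.2.1 y.1 ≠ ⊤} from
    biClosure_subset hbi (by rintro _ ⟨a, rfl⟩; simp [chi, stepFn]) h
  refine .intro (fun {a a' φ φ'} ha hφ h => ?_) (fun φ => ?_) (fun a => ?_)
    (fun {a φ₀ φ₁} h₀ h₁ => ?_) (fun {a₀ a₁ φ} h₀ h₁ => ?_)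
  · exact ne_top_of_le_ne_top h ((φ.2.monotone ha).trans (hφ a'))
  · simp [φ.2.map_bot]
  · simp [coe_bot]
  · simp_all [coe_sup]
  · exact ne_top_of_le_ne_top (by simp_all) (φ.2.map_sup_le a₀ a₁)

/-- The supremum of the values `φ p` over the section of `levelIdeal A` at `p`. -/
noncomputable def maxLevel (p : A) : ℕ∞ :=
  ⨆ φ : {φ : LevelFn A // (p, φ) ∈ levelIdeal A}, φ.1.1 p

theorem le_maxLevel {p : A} {φ : LevelFn A} (h : (p, φ) ∈ levelIdeal A) : φ.1 p ≤ maxLevel p :=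
  le_iSup (fun φ : {φ : LevelFn A // (p, φ) ∈ levelIdeal A} => φ.1.1 p) ⟨φ, h⟩

theorem maxLevel_ne_top [Finite A] (h : ∀ s : ℕ → LevelFn A, TensorIsLattice A (ChainGlue s))
    (p : A) : maxLevel p ≠ ⊤ := by
  intro htop
  have hunbounded (n : ℕ) : ∃ φ : LevelFn A, (p, φ) ∈ levelIdeal A ∧ n < φ.1 p := by
    obtain ⟨φ, hφ⟩ := iSup_eq_top.1 htop n (ENat.natCast_lt_top n)
    exact ⟨φ.1, φ.2, hφ⟩
  choose s hs hlt using hunbounded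
  refine ne_top_of_mem_levelIdeal
    (iSup_mem_of_tensorIsLattice_chainGlue (h s) isFGBiIdeal_levelIdeal hs) ?_
  exact ENat.eq_top_iff_forall_gt.2 fun n => (hlt n).trans_le (le_iSup s n p)

theorem maxLevel_add_one_le [Finite A] {p q : A} (h : JoinDep A q p) :
    maxLevel q + 1 ≤ maxLevel p := by
  obtain ⟨I, hI, hq⟩ := h
  obtain ⟨t, hpt, ht, hqt⟩ := hI.exists_separator hq
  have : Nonempty {φ : LevelFn A // (q, φ) ∈ levelIdeal A} := ⟨⟨chi q, chi_mem_levelIdeal q⟩⟩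
  rw [maxLevel, ENat.iSup_add]
  refine iSup_le fun ⟨φ, hφ⟩ => ?_
  let ζ : LevelFn A := ⟨stepFn t q (φ.1 q), isLevel_stepFn t q _⟩
  have hζp : ζ.1 p = φ.1 q + 1 := by simp [ζ, stepFn, hpt, hI.not_le hq]
  have hζ : ∀ i ∈ I, (i, ζ) ∈ levelIdeal A := by
    intro i hi
    by_cases hiq : i = q
    · subst hiq
      exact isBiIdeal_levelIdeal.mem_of_le
        (isBiIdeal_levelIdeal.sup_right_mem hφ (chi_mem_levelIdeal i)) le_rfl
        (stepFn_le_sup_chi hqt φ)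
    · exact isBiIdeal_levelIdeal.mem_of_le (chi_mem_levelIdeal i) le_rfl
        (le_chi_iff.2 (if_pos (ht i hi hiq)))
  exact hζp ▸ le_maxLevel (isBiIdeal_levelIdeal.mem_of_le
    (isBiIdeal_levelIdeal.finsetSup_left_mem hζ) hI.le_sup le_rfl)

end LevelFunctions

theorem wellFounded_joinDep_of_tensorIsLattice {A : Type*} [SemilatticeSup A] [OrderBot A]
    [Finite A] (h : ∀ (B : Type u) [Lattice B] [OrderBot B], TensorIsLattice A B) :
    WellFounded (JoinDep A) := by
  refine Subrelation.wf (fun {q p} hqp => ?_) (InvImage.wf (maxLevel (A := A)) wellFounded_lt)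
  have hq : maxLevel q ≠ ⊤ := maxLevel_ne_top (fun s => tensorIsLattice_of_small h _) q
  exact (ENat.add_one_le_iff hq).1 (maxLevel_add_one_le hqp)

/-- A finite lattice `A` is amenable (for every lattice `B` with zero, the tensor
product `A ⊗ B` is a lattice) if and only if `A` satisfies condition (T∨). -/
theorem amenable_iff_condT (A : Type*) [Lattice A] [Fintype A] [OrderBot A] :
    (∀ (B : Type u) [Lattice B] [OrderBot B], TensorIsLattice A B) ↔ CondT A := by
  rw [condT_iff_wellFounded_joinDep]
  exact ⟨fun h => wellFounded_joinDep_of_tensorIsLattice h,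
    fun h _ _ _ => tensorIsLattice_of_wellFounded_joinDep h⟩
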